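/- Let (X_1,…,X_r) have the GEV_r density f_r with parameters μ ∈ ℝ, σ > 0, ξ ≠ 0. Then for every j with 1 ≤ j ≤ r, E[(1+ξ Z_j)^{−1/ξ}] = j. -/

import Mathlib

open MeasureTheory ProbabilityTheory Real Filter Topology

/-- The joint density of the `r` largest order statistics limit (GEV_r) with
location `μ`, scale `σ`, and shape `ξ ≠ 0`.  The coordinates are in decreasing
order: `x 0` is `x_1` (the largest) and `x ⟨r-1,_⟩` is `x_r`. -/
noncomputable def gevrDensity (μ σ ξ : ℝ) (r : ℕ) (x : Fin r → ℝ) : ℝ :=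
  if h : 0 < r ∧ StrictAnti x ∧ (∀ j, 0 < 1 + ξ * ((x j - μ) / σ)) then
    (σ ^ r)⁻¹ * Real.exp
      (-(1 + ξ * ((x ⟨r - 1, Nat.sub_lt h.1 Nat.one_pos⟩ - μ) / σ)) ^ (-1 / ξ)
        - (1 / ξ + 1) * ∑ j, Real.log (1 + ξ * ((x j - μ) / σ)))
  else 0

/-- The GEV_r probability measure on `ℝ^r`, given by the density `gevrDensity`. -/
noncomputable def gevrMeasure (μ σ ξ : ℝ) (r : ℕ) : Measure (Fin r → ℝ) :=
  MeasureTheory.volume.withDensity fun x => ENNReal.ofReal (gevrDensity μ σ ξ r x)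

/-!
The map `x ↦ (1 + ξ (x - μ) / σ) ^ (-1 / ξ)` is a decreasing bijection from the support of the
GEV distribution onto `(0, ∞)`, and its Jacobian is exactly the product factor of the GEV_r density.
Applied coordinatewise it therefore carries GEV_r to the law with density `exp (-t_r)` on
`0 < t_1 < ⋯ < t_r`, the law of the first `r` arrival times of a Poisson process of rate `1`.
These arrival times are the partial sums of independent standard exponential variables (the
summation map is unimodular), so the `j`-th one has mean `j`.
-/

open scoped ENNReal

section ProductDensity

theorem lintegral_fin_nat_prod_eq_prod {n : ℕ} {E : Fin n → Type*} [∀ i, MeasurableSpace (E i)]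
    {μ : ∀ i, Measure (E i)} [∀ i, SigmaFinite (μ i)] {f : ∀ i, E i → ℝ≥0∞}
    (hf : ∀ i, Measurable (f i)) :
    ∫⁻ x, ∏ i, f i (x i) ∂Measure.pi μ = ∏ i, ∫⁻ t, f i t ∂μ i := by
  induction n with
  | zero => simp
  | succ n ih =>
    calc ∫⁻ x, ∏ i, f i (x i) ∂Measure.pi μ
      _ = ∫⁻ z, f 0 z.1 * ∏ i : Fin n, f i.succ (z.2 i)
            ∂((μ 0).prod (Measure.pi fun i ↦ μ i.succ)) := by
          rw [← (measurePreserving_piFinSuccAbove μ 0).symm.lintegral_comp (by fun_prop)]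
          exact lintegral_congr fun z ↦ Fin.prod_univ_succ _
      _ = (∫⁻ t, f 0 t ∂μ 0) * ∏ i : Fin n, ∫⁻ t, f i.succ t ∂μ i.succ := by
          have htail : Measurable fun y : ∀ i : Fin n, E i.succ ↦ ∏ i, f i.succ (y i) :=
            Finset.measurable_fun_prod _ fun i _ ↦ (hf i.succ).comp (measurable_pi_apply i)
          rw [← ih fun i ↦ hf i.succ,
            ← lintegral_prod_mul (hf 0).aemeasurable htail.aemeasurable]
      _ = ∏ i, ∫⁻ t, f i t ∂μ i := by rw [Fin.prod_univ_succ]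

variable {ι : Type*} [Fintype ι] {E : ι → Type*} [∀ i, MeasurableSpace (E i)]
  {μ : ∀ i, Measure (E i)} [∀ i, SigmaFinite (μ i)]

theorem lintegral_fintype_prod_eq_prod {f : ∀ i, E i → ℝ≥0∞} (hf : ∀ i, Measurable (f i)) :
    ∫⁻ x, ∏ i, f i (x i) ∂Measure.pi μ = ∏ i, ∫⁻ t, f i t ∂μ i := by
  let e := (Fintype.equivFin ι).symm
  rw [← (measurePreserving_piCongrLeft μ e).lintegral_comp (by fun_prop)]
  simp_rw [← e.prod_comp, MeasurableEquiv.coe_piCongrLeft, Equiv.piCongrLeft_apply_apply]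
  exact lintegral_fin_nat_prod_eq_prod fun i ↦ hf (e i)

theorem pi_withDensity {d : ∀ i, E i → ℝ≥0∞} (hd : ∀ i, Measurable (d i))
    [∀ i, SigmaFinite ((μ i).withDensity (d i))] :
    Measure.pi (fun i ↦ (μ i).withDensity (d i)) =
      (Measure.pi μ).withDensity fun x ↦ ∏ i, d i (x i) := by
  refine Measure.pi_eq fun s hs ↦ ?_
  rw [withDensity_apply _ (.univ_pi hs), Measure.restrict_pi_pi,
    lintegral_fintype_prod_eq_prod hd]
  exact Finset.prod_congr rfl fun i _ ↦ (withDensity_apply _ (hs i)).symm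

end ProductDensity

theorem measurePreserving_withDensity_comp {α β : Type*} [MeasurableSpace α] [MeasurableSpace β]
    {μ : Measure α} {ν : Measure β} {f : α → β} (hf : MeasurePreserving f μ ν) {g : β → ℝ≥0∞}
    (hg : Measurable g) :
    MeasurePreserving f (μ.withDensity fun x ↦ g (f x)) (ν.withDensity g) where
  measurable := hf.measurable
  map_eq := by
    ext s hs
    rw [Measure.map_apply hf.measurable hs, withDensity_apply _ (hf.measurable hs),
      withDensity_apply _ hs, ← hf.setLIntegral_comp_preimage hs hg]

theorem measurePreserving_withDensity_abs_deriv {f f' : ℝ → ℝ} {s : Set ℝ} (hf : Measurable f)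
    (hs : NullMeasurableSet s) (hf' : ∀ x ∈ s, HasDerivWithinAt f (f' x) s x)
    (hinj : s.InjOn f) :
    MeasurePreserving f ((volume.restrict s).withDensity fun x ↦ ENNReal.ofReal |f' x|)
      (volume.restrict (f '' s)) where
  measurable := hf
  map_eq := by
    simpa only [ContinuousLinearMap.det_toSpanSingleton] using
      map_withDensity_abs_det_fderiv_eq_addHaar volume hs
        (fun x hx ↦ (hf' x hx).hasFDerivWithinAt) hinj

section Exponential

theorem expMeasure_eq_withDensity_restrict_Ioi (r : ℝ) :
    expMeasure r =
      (volume.restrict (Set.Ioi 0)).withDensity fun x ↦ ENNReal.ofReal (r * exp (-(r * x))) := by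
  have hpdf : exponentialPDF r =
      (Set.Ici 0).indicator fun x ↦ ENNReal.ofReal (r * exp (-(r * x))) := by
    ext x
    simp only [exponentialPDF_eq, Set.indicator, Set.mem_Ici, apply_ite ENNReal.ofReal,
      ENNReal.ofReal_zero]
  rw [restrict_Ioi_eq_restrict_Ici, ← withDensity_indicator measurableSet_Ici, ← hpdf]
  rfl

theorem integral_id_expMeasure {r : ℝ} (hr : 0 < r) : ∫ x, x ∂expMeasure r = r⁻¹ := by
  have hGamma : ∫ x in Set.Ioi (0 : ℝ), x * exp (-(r * x)) = (r ^ 2)⁻¹ := by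
    simpa [show (2 : ℝ) - 1 = 1 by norm_num] using integral_rpow_mul_exp_neg_mul_Ioi two_pos hr
  rw [expMeasure_eq_withDensity_restrict_Ioi, integral_withDensity_eq_integral_toReal_smul
    (by fun_prop) (ae_of_all _ fun _ ↦ ENNReal.ofReal_lt_top)]
  calc ∫ x in Set.Ioi 0, (ENNReal.ofReal (r * exp (-(r * x)))).toReal • x
    _ = ∫ x in Set.Ioi 0, r * (x * exp (-(r * x))) := by
        refine integral_congr_ae (ae_of_all _ fun x ↦ ?_)
        dsimp only
        rw [ENNReal.toReal_ofReal (by positivity), smul_eq_mul]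
        ring
    _ = r⁻¹ := by
        rw [integral_const_mul, hGamma]
        field_simp

theorem integrable_id_expMeasure {r : ℝ} (hr : 0 < r) : Integrable id (expMeasure r) :=
  .of_integral_ne_zero ((integral_id_expMeasure hr).trans_ne (inv_ne_zero hr.ne'))

end Exponential

section CumulativeSum

/-- The partial sums `i ↦ ∑ j ≤ i, e j`, turning waiting times into arrival times. -/
def cumulativeSum {ι M : Type*} [Preorder ι] [LocallyFiniteOrderBot ι] [AddCommMonoid M]
    (e : ι → M) (i : ι) : M :=
  ∑ j ∈ Finset.Iic i, e j

theorem measurePreserving_cumulativeSum {ι : Type*} [Fintype ι] [LinearOrder ι]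
    [LocallyFiniteOrderBot ι] :
    MeasurePreserving (cumulativeSum : (ι → ℝ) → ι → ℝ) volume volume := by
  let A : Matrix ι ι ℝ := .of fun i j ↦ if j ≤ i then 1 else 0
  have hA : Matrix.toLin' A = (cumulativeSum : (ι → ℝ) → ι → ℝ) := by
    ext e i
    simp [A, cumulativeSum, Matrix.mulVec, dotProduct, ← Finset.sum_filter, Finset.filter_ge_eq_Iic]
  have hdet : A.det = 1 := by
    rw [Matrix.det_of_isLowerTriangular A fun i j hij ↦ if_neg (not_le.2 hij)]
    simp [A]
  refine ⟨hA ▸ (LinearMap.continuous_of_finiteDimensional _).measurable, ?_⟩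
  rw [← hA, Real.map_matrix_volume_pi_eq_smul_volume_pi (by simp [hdet])]
  simp [hdet]

variable {M : Type*} [AddCommMonoid M] {n : ℕ} (e : Fin (n + 1) → M)

theorem cumulativeSum_zero : cumulativeSum e 0 = e 0 := by
  simp [cumulativeSum, ← bot_eq_zero (α := Fin (n + 1))]

theorem cumulativeSum_succ (i : Fin n) :
    cumulativeSum e i.succ = cumulativeSum e i.castSucc + e i.succ := by
  have hIic : Finset.Iic i.succ = insert i.succ (Finset.Iic i.castSucc) := by
    ext j
    simp only [Finset.mem_Iic, Finset.mem_insert, Fin.le_def, Fin.ext_iff, Fin.val_succ,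
      Fin.val_castSucc]
    omega
  rw [cumulativeSum, hIic, Finset.sum_insert (by simp), add_comm]
  rfl

theorem cumulativeSum_last : cumulativeSum e (Fin.last n) = ∑ i, e i := by
  rw [cumulativeSum, ← Fin.top_eq_last, Finset.Iic_top]

end CumulativeSum

theorem measurableSet_strictMono {ι α : Type*} [Countable ι] [Preorder ι] [TopologicalSpace α]
    [MeasurableSpace α] [OpensMeasurableSpace α] [LinearOrder α] [OrderClosedTopology α]
    [SecondCountableTopology α] : MeasurableSet {t : ι → α | StrictMono t} := by
  simp only [StrictMono, Set.ofPred_forall]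
  exact .iInter fun i ↦ .iInter fun j ↦ .iInter fun _ ↦
    measurableSet_lt (measurable_pi_apply i) (measurable_pi_apply j)

section Arrival

/-- The region `0 < t 0 < ⋯ < t n` of possible values of `n + 1` successive arrival times. -/
def arrivalSet (n : ℕ) : Set (Fin (n + 1) → ℝ) := {t | 0 < t 0 ∧ StrictMono t}

theorem measurableSet_arrivalSet (n : ℕ) : MeasurableSet (arrivalSet n) :=
  (measurableSet_lt measurable_const (measurable_pi_apply 0)).inter measurableSet_strictMono

theorem arrivalSet_eq_strictMono_inter_pi (n : ℕ) :
    arrivalSet n = {t | StrictMono t} ∩ Set.univ.pi fun _ ↦ Set.Ioi 0 := by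
  ext t
  simp only [arrivalSet, Set.mem_ofPred_eq, Set.mem_inter_iff, Set.mem_univ_pi, Set.mem_Ioi]
  exact ⟨fun ⟨h0, ht⟩ ↦ ⟨ht, fun i ↦ h0.trans_le (ht.monotone (Fin.zero_le i))⟩,
    fun ⟨ht, hpos⟩ ↦ ⟨hpos 0, ht⟩⟩

theorem cumulativeSum_preimage_arrivalSet (n : ℕ) :
    cumulativeSum ⁻¹' arrivalSet n = Set.univ.pi fun _ ↦ Set.Ioi 0 := by
  ext e
  simp only [arrivalSet, Set.mem_preimage, Set.mem_ofPred_eq, Fin.strictMono_iff_lt_succ,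
    cumulativeSum_zero, cumulativeSum_succ, lt_add_iff_pos_right, Set.mem_univ_pi, Set.mem_Ioi,
    Fin.forall_fin_succ (P := fun i ↦ 0 < e i)]

/-- The law of the first `n + 1` arrival times of a Poisson process of rate `r`. -/
noncomputable def poissonArrivalMeasure (r : ℝ) (n : ℕ) : Measure (Fin (n + 1) → ℝ) :=
  (volume.restrict (arrivalSet n)).withDensity fun t ↦
    ENNReal.ofReal (r ^ (n + 1) * exp (-(r * t (Fin.last n))))

theorem measurePreserving_cumulativeSum_expMeasure {r : ℝ} (hr : 0 ≤ r) (n : ℕ) :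
    MeasurePreserving cumulativeSum (Measure.pi fun _ : Fin (n + 1) ↦ expMeasure r)
      (poissonArrivalMeasure r n) := by
  have hdensity (e : Fin (n + 1) → ℝ) : ∏ i, ENNReal.ofReal (r * exp (-(r * e i))) =
      ENNReal.ofReal (r ^ (n + 1) * exp (-(r * cumulativeSum e (Fin.last n)))) := by
    rw [← ENNReal.ofReal_prod_of_nonneg fun i _ ↦ by positivity, Finset.prod_mul_distrib,
      ← exp_sum, Finset.prod_const, Finset.card_fin, cumulativeSum_last, Finset.sum_neg_distrib,
      Finset.mul_sum]
  have hrestrict := measurePreserving_cumulativeSum.restrict_preimage (measurableSet_arrivalSet n)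
  rw [cumulativeSum_preimage_arrivalSet] at hrestrict
  simp_rw [expMeasure_eq_withDensity_restrict_Ioi]
  rw [pi_withDensity fun _ ↦ by fun_prop, ← Measure.restrict_pi_pi, ← volume_pi]
  simp_rw [hdensity]
  have hmeas : Measurable fun t : Fin (n + 1) → ℝ ↦
      ENNReal.ofReal (r ^ (n + 1) * exp (-(r * t (Fin.last n)))) := by fun_prop
  exact (measurePreserving_withDensity_comp hrestrict hmeas :)

theorem integral_eval_poissonArrivalMeasure {r : ℝ} (hr : 0 < r) {n : ℕ} (k : Fin (n + 1)) :
    ∫ t, t k ∂poissonArrivalMeasure r n = (k + 1) / r := by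
  have := isProbabilityMeasure_expMeasure hr
  calc ∫ t, t k ∂poissonArrivalMeasure r n
    _ = ∫ e, cumulativeSum e k ∂Measure.pi fun _ : Fin (n + 1) ↦ expMeasure r :=
        ((measurePreserving_cumulativeSum_expMeasure hr.le n).hasLaw.integral_comp
          (measurable_pi_apply k).aestronglyMeasurable).symm
    _ = ∑ _ ∈ Finset.Iic k, ∫ x, x ∂expMeasure r := by
        unfold cumulativeSum
        rw [integral_finsetSum _ fun i _ ↦ integrable_eval (i := i) (integrable_id_expMeasure hr)]
        simp_rw [integral_eval]
    _ = (k + 1) / r := by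
        rw [integral_id_expMeasure hr, Finset.sum_const, Fin.card_Iic, nsmul_eq_mul, div_eq_mul_inv]
        push_cast
        rfl

end Arrival

section GEV

/-- The support of the GEV distribution with location `μ`, scale `σ` and shape `ξ`. -/
def gevSupport (μ σ ξ : ℝ) : Set ℝ := {x | 0 < 1 + ξ * ((x - μ) / σ)}

/-- The transformation `W = (1 + ξ Z) ^ (-1 / ξ)`, with `Z = (x - μ) / σ`, that makes a GEV variable
standard exponential. -/
noncomputable def gevExpTransform (μ σ ξ x : ℝ) : ℝ := (1 + ξ * ((x - μ) / σ)) ^ (-1 / ξ)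

variable {μ σ ξ : ℝ}

theorem measurableSet_gevSupport : MeasurableSet (gevSupport μ σ ξ) :=
  measurableSet_lt (by fun_prop) (by fun_prop)

@[fun_prop]
theorem measurable_gevExpTransform : Measurable (gevExpTransform μ σ ξ) := by
  unfold gevExpTransform
  fun_prop

theorem hasDerivAt_gevExpTransform (hξ : ξ ≠ 0) {x : ℝ} (hx : x ∈ gevSupport μ σ ξ) :
    HasDerivAt (gevExpTransform μ σ ξ) (-(σ⁻¹ * (1 + ξ * ((x - μ) / σ)) ^ (-1 / ξ - 1))) x := by
  have hbase : HasDerivAt (fun x ↦ 1 + ξ * ((x - μ) / σ)) (ξ * (1 / σ)) x :=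
    ((((hasDerivAt_id x).sub_const μ).div_const σ).const_mul ξ).const_add 1
  refine (hbase.rpow_const (p := -1 / ξ) (.inl (ne_of_gt hx))).congr_deriv ?_
  field_simp

theorem abs_deriv_gevExpTransform (hσ : 0 < σ) (hξ : ξ ≠ 0) {x : ℝ} (hx : x ∈ gevSupport μ σ ξ) :
    |deriv (gevExpTransform μ σ ξ) x| =
      σ⁻¹ * exp (-((1 / ξ + 1) * log (1 + ξ * ((x - μ) / σ)))) := by
  rw [(hasDerivAt_gevExpTransform hξ hx).deriv, abs_neg, rpow_def_of_pos hx,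
    abs_of_pos (by positivity)]
  ring_nf

theorem strictAntiOn_gevExpTransform (hσ : 0 < σ) (hξ : ξ ≠ 0) :
    StrictAntiOn (gevExpTransform μ σ ξ) (gevSupport μ σ ξ) := by
  intro x hx y hy hxy
  have hz : (x - μ) / σ < (y - μ) / σ := by gcongr
  rcases hξ.lt_or_gt with hneg | hpos
  · exact rpow_lt_rpow (le_of_lt hy) (by nlinarith) (div_pos_of_neg_of_neg (by norm_num) hneg)
  · exact rpow_lt_rpow_of_neg hx (by nlinarith) (div_neg_of_neg_of_pos (by norm_num) hpos)

theorem image_gevExpTransform_gevSupport (hσ : σ ≠ 0) (hξ : ξ ≠ 0) :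
    gevExpTransform μ σ ξ '' gevSupport μ σ ξ = Set.Ioi 0 := by
  refine Set.Subset.antisymm (Set.image_subset_iff.2 fun x hx ↦ rpow_pos_of_pos hx _) ?_
  intro v (hv : 0 < v)
  have hbase : 1 + ξ * ((μ + σ * ((v ^ (-ξ) - 1) / ξ) - μ) / σ) = v ^ (-ξ) := by
    field_simp
    ring
  refine ⟨μ + σ * ((v ^ (-ξ) - 1) / ξ), ?_, ?_⟩
  · rw [gevSupport, Set.mem_ofPred_eq, hbase]
    positivity
  · rw [gevExpTransform, hbase, ← rpow_mul hv.le, show -ξ * (-1 / ξ) = 1 by field_simp, rpow_one]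

theorem measurePreserving_gevExpTransform (hσ : 0 < σ) (hξ : ξ ≠ 0) :
    MeasurePreserving (gevExpTransform μ σ ξ)
      ((volume.restrict (gevSupport μ σ ξ)).withDensity fun x ↦
        ENNReal.ofReal |deriv (gevExpTransform μ σ ξ) x|)
      (volume.restrict (Set.Ioi 0)) := by
  rw [← image_gevExpTransform_gevSupport hσ.ne' hξ]
  exact measurePreserving_withDensity_abs_deriv measurable_gevExpTransform
    measurableSet_gevSupport.nullMeasurableSet
    (fun x hx ↦ (hasDerivAt_gevExpTransform hξ hx).differentiableAt.hasDerivAt.hasDerivWithinAt)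
    (strictAntiOn_gevExpTransform hσ hξ).injOn

/-- The support `D_n` of the GEV_n density. -/
def orderedGevSupport (μ σ ξ : ℝ) (n : ℕ) : Set (Fin n → ℝ) :=
  {x | (∀ i, x i ∈ gevSupport μ σ ξ) ∧ StrictAnti x}

theorem orderedGevSupport_eq (hσ : 0 < σ) (hξ : ξ ≠ 0) (n : ℕ) :
    {x | StrictMono fun i ↦ gevExpTransform μ σ ξ (x i)} ∩
      Set.univ.pi (fun _ ↦ gevSupport μ σ ξ) = orderedGevSupport μ σ ξ n := by
  ext x
  simp only [Set.mem_inter_iff, Set.mem_univ_pi, Set.mem_ofPred_eq, orderedGevSupport,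
    and_comm (b := ∀ _, _)]
  refine and_congr_right fun hx ↦ ?_
  exact forall₂_congr fun i j ↦ imp_congr_right fun _ ↦
    (strictAntiOn_gevExpTransform hσ hξ).lt_iff_gt (hx i) (hx j)

theorem gevrDensity_succ (hσ : 0 < σ) (hξ : ξ ≠ 0) (n : ℕ) :
    gevrDensity μ σ ξ (n + 1) = (orderedGevSupport μ σ ξ (n + 1)).indicator fun x ↦
      (∏ i, |deriv (gevExpTransform μ σ ξ) (x i)|) *
        exp (-gevExpTransform μ σ ξ (x (Fin.last n))) := by
  ext x
  by_cases hx : x ∈ orderedGevSupport μ σ ξ (n + 1)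
  · have hderiv : ∏ i, |deriv (gevExpTransform μ σ ξ) (x i)| =
        (σ ^ (n + 1))⁻¹ *
          exp (-((1 / ξ + 1) * ∑ i, log (1 + ξ * ((x i - μ) / σ)))) := by
      simp_rw [abs_deriv_gevExpTransform hσ hξ (hx.1 _)]
      rw [Finset.prod_mul_distrib, ← exp_sum, Finset.prod_const, Finset.card_fin, inv_pow,
        Finset.sum_neg_distrib, Finset.mul_sum]
    rw [Set.indicator_of_mem hx, gevrDensity, dif_pos ⟨n.succ_pos, hx.2, hx.1⟩, hderiv]
    change (σ ^ (n + 1))⁻¹ * exp (-gevExpTransform μ σ ξ (x (Fin.last n)) - _) = _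
    rw [sub_eq_add_neg, exp_add]
    ring
  · rw [Set.indicator_of_notMem hx, gevrDensity, dif_neg fun h ↦ hx ⟨h.2.2, h.2.1⟩]

theorem gevrMeasure_succ (hσ : 0 < σ) (hξ : ξ ≠ 0) (n : ℕ) :
    gevrMeasure μ σ ξ (n + 1) =
      ((Measure.pi fun _ ↦ (volume.restrict (gevSupport μ σ ξ)).withDensity fun x ↦
          ENNReal.ofReal |deriv (gevExpTransform μ σ ξ) x|).restrict
        {x | StrictMono fun i ↦ gevExpTransform μ σ ξ (x i)}).withDensity
      fun x ↦ ENNReal.ofReal (exp (-gevExpTransform μ σ ξ (x (Fin.last n)))) := by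
  have hderiv : Measurable fun x ↦ ENNReal.ofReal |deriv (gevExpTransform μ σ ξ) x| :=
    ENNReal.measurable_ofReal.comp (measurable_deriv _).abs
  have hmono : MeasurableSet
      {x : Fin (n + 1) → ℝ | StrictMono fun i ↦ gevExpTransform μ σ ξ (x i)} :=
    measurableSet_preimage (by fun_prop) measurableSet_strictMono
  have hsupport : MeasurableSet (orderedGevSupport μ σ ξ (n + 1)) := by
    rw [← orderedGevSupport_eq hσ hξ]
    exact hmono.inter (.univ_pi fun _ ↦ measurableSet_gevSupport)
  rw [pi_withDensity fun _ ↦ hderiv, ← Measure.restrict_pi_pi, restrict_withDensity hmono,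
    Measure.restrict_restrict hmono, orderedGevSupport_eq hσ hξ, ← withDensity_mul _ (by fun_prop)
    (by fun_prop), ← withDensity_indicator hsupport, ← volume_pi, gevrMeasure,
    gevrDensity_succ hσ hξ]
  congr with x
  by_cases hx : x ∈ orderedGevSupport μ σ ξ (n + 1)
  · simp only [Set.indicator_of_mem hx, Pi.mul_apply]
    rw [ENNReal.ofReal_mul (by positivity), ENNReal.ofReal_prod_of_nonneg fun _ _ ↦ abs_nonneg _]
  · simp only [Set.indicator_of_notMem hx, ENNReal.ofReal_zero]

theorem measurePreserving_gevExpTransform_gevrMeasure (hσ : 0 < σ) (hξ : ξ ≠ 0) (n : ℕ) :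
    MeasurePreserving (fun x i ↦ gevExpTransform μ σ ξ (x i)) (gevrMeasure μ σ ξ (n + 1))
      (poissonArrivalMeasure 1 n) := by
  have hpi := measurePreserving_pi _ _ fun _ : Fin (n + 1) ↦
    measurePreserving_gevExpTransform (μ := μ) hσ hξ
  have hrestrict := hpi.restrict_preimage measurableSet_strictMono
  rw [← Measure.restrict_pi_pi, Measure.restrict_restrict measurableSet_strictMono,
    ← arrivalSet_eq_strictMono_inter_pi, ← volume_pi] at hrestrict
  rw [gevrMeasure_succ hσ hξ, poissonArrivalMeasure]
  simp only [one_pow, one_mul]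
  have hmeas : Measurable fun t : Fin (n + 1) → ℝ ↦
      ENNReal.ofReal (exp (-t (Fin.last n))) := by fun_prop
  exact (measurePreserving_withDensity_comp hrestrict hmeas :)

end GEV

/-- under the GEV_r distribution, `E[(1+ξZ_j)^{−1/ξ}] = j` for
every `1 ≤ j ≤ r`. -/
theorem gevr_moment_exp_transform
    (μ σ ξ : ℝ) (hσ : 0 < σ) (hξ : ξ ≠ 0) (r : ℕ) (hr : 1 ≤ r)
    (j : ℕ) (hj1 : 1 ≤ j) (hjr : j ≤ r) :
    ∫ x : Fin r → ℝ,
        (1 + ξ * ((x ⟨j - 1, by omega⟩ - μ) / σ)) ^ (-1 / ξ)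
        ∂(gevrMeasure μ σ ξ r)
      = (j : ℝ) := by
  obtain ⟨n, rfl⟩ := Nat.exists_eq_add_of_le' hr
  obtain ⟨k, rfl⟩ := Nat.exists_eq_add_of_le' hj1
  calc ∫ x, gevExpTransform μ σ ξ (x ⟨k, hjr⟩) ∂gevrMeasure μ σ ξ (n + 1)
    _ = ∫ t, t ⟨k, hjr⟩ ∂poissonArrivalMeasure 1 n :=
        (measurePreserving_gevExpTransform_gevrMeasure hσ hξ n).hasLaw.integral_comp
          (measurable_pi_apply _).aestronglyMeasurable
    _ = (k + 1 : ℕ) := by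
        rw [integral_eval_poissonArrivalMeasure one_pos]
        push_cast
        rw [div_one]
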